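/- Let V be a leafless rooted directed tree and μ=(μ_v)_{v∈V} a weight of nonzero scalars. Let 1<p<∞ and suppose the unweighted backward shift B is an operator on ℓ^p(V,μ). Then B is chaotic on ℓ^p(V,μ) if and only if c_p(V(v),μ)<∞ for every v∈V. -/

import Mathlib

open scoped ENNReal NNReal Topology Classical
open Filter

namespace PaperTree

/-! ### Directed trees -/

variable {V : Type*}

/-- Iterated parent map of a directed tree given by a parent function. -/
def parIter (par : V → Option V) : ℕ → V → Option V
  | 0, v => some v
  | n + 1, v => (par v).bind (parIter par n)

/-- `par` is the parent function of a (countable, connected, acyclic) directed tree on `V`,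
in which every vertex has at most one parent and at most one vertex (the root) has none. -/
structure IsDirectedTree (par : V → Option V) : Prop where
  countable : Countable V
  acyclic : ∀ (v : V) (n : ℕ), 0 < n → parIter par n v ≠ some v
  connected : ∀ u v : V, ∃ (m n : ℕ) (w : V), parIter par m u = some w ∧ parIter par n v = some w
  root_unique : ∀ u v : V, par u = none → par v = none → u = v

/-- The set of children of `v`. -/
def children (par : V → Option V) (v : V) : Set V := {u : V | par u = some v}

/-- The set of descendants of `v` (including `v`); the rooted subtree `V(v)`. -/
def descendants (par : V → Option V) (v : V) : Set V := {u : V | ∃ n : ℕ, parIter par n u = some v}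

def IsLeafV (par : V → Option V) (v : V) : Prop := children par v = ∅

def Leafless (par : V → Option V) : Prop := ∀ v : V, children par v ≠ ∅

def IsRoot (par : V → Option V) (v : V) : Prop := par v = none

def Rooted (par : V → Option V) : Prop := ∃ v : V, IsRoot par v

def Unrooted (par : V → Option V) : Prop := ∀ v : V, par v ≠ none

/-- The tree has a free left end: some vertex all of whose (proper) ancestors
have exactly one child. -/
def HasFreeLeftEnd (par : V → Option V) : Prop :=
  ∃ v : V, ∀ n : ℕ, 1 ≤ n → ∀ w : V, parIter par n v = some w → ∃! u : V, u ∈ children par w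

/-- The tree has finite length (all branches have uniformly bounded length). -/
def FiniteLength (par : V → Option V) : Prop := ∃ m : ℕ, ∀ u : V, parIter par (m + 1) u = none

/-- Product of the weights along the upward path of length `n` ending at `u`;
for `u ∈ Chi^n(v)` this is `λ(v → u)`, and `pathProd par lam n v = λ(par^n(v) → v)`. -/
def pathProd {𝕜 : Type*} [Monoid 𝕜] (par : V → Option V) (lam : V → 𝕜) : ℕ → V → 𝕜
  | 0, _ => 1
  | n + 1, u => lam u * ((par u).elim 1 (pathProd par lam n))

/-- A (finite or infinite, maximal) branch starting at `v`, encoded with `Option`. -/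
def IsOptBranch (par : V → Option V) (v : V) (b : ℕ → Option V) : Prop :=
  b 0 = some v ∧
  (∀ (k : ℕ) (w : V), b k = some w →
      (children par w = ∅ ∧ b (k + 1) = none) ∨ ∃ u ∈ children par w, b (k + 1) = some u) ∧
  ∀ k : ℕ, b k = none → b (k + 1) = none

/-- An infinite branch starting at `v` (adequate for leafless trees). -/
def IsBranch (par : V → Option V) (v : V) (b : ℕ → V) : Prop :=
  b 0 = v ∧ ∀ k : ℕ, b (k + 1) ∈ children par (b k)

/-- The `[0,∞]`-valued absolute weight associated with a scalar weight. -/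
noncomputable def nw {𝕜 : Type*} [RCLike 𝕜] (μ : V → 𝕜) : V → ℝ≥0∞ := fun v => (‖μ v‖₊ : ℝ≥0∞)

/-! ### Linear dynamics -/

section Dynamics

variable {𝕜 : Type*} [RCLike 𝕜] {X : Type*} [AddCommGroup X] [Module 𝕜 X] [TopologicalSpace X]

/-- An operator is hypercyclic if some vector has dense orbit. -/
def Hypercyclic (T : X →L[𝕜] X) : Prop :=
  ∃ x : X, Dense (Set.range fun n : ℕ => (T ^ n) x)

/-- A periodic point of the operator `T`. -/
def IsPeriodicPoint (T : X →L[𝕜] X) (x : X) : Prop :=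
  ∃ N : ℕ, 1 ≤ N ∧ (T ^ N) x = x

/-- An operator is chaotic if it is hypercyclic and has a dense set of periodic points. -/
def ChaoticOp (T : X →L[𝕜] X) : Prop :=
  Hypercyclic T ∧ Dense {x : X | IsPeriodicPoint T x}

/-- Topological mixing. -/
def MixingOp (T : X →L[𝕜] X) : Prop :=
  ∀ U₁ U₂ : Set X, IsOpen U₁ → IsOpen U₂ → U₁.Nonempty → U₂.Nonempty →
    ∃ m : ℕ, ∀ n : ℕ, m ≤ n → ((⇑(T ^ n)) '' U₁ ∩ U₂).Nonempty

/-- Weak mixing: `T ⊕ T` is hypercyclic on `X × X`. -/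
def WeaklyMixingOp (T : X →L[𝕜] X) : Prop :=
  Hypercyclic (T.prodMap T)

variable {V : Type*}

/-- `T` is (a representation via the coefficient embedding `ι` of) the weighted backward
shift `B_λ` as an operator on `X`: for every `x ∈ X` and every vertex `v` the defining
series converges unconditionally to the `v`-th coefficient of `T x`. -/
def IsShiftRep (par : V → Option V) (lam : V → 𝕜) (ι : X →ₗ[𝕜] V → 𝕜) (T : X →L[𝕜] X) : Prop :=
  ∀ (x : X) (v : V), HasSum (fun u : ↥(children par v) => lam u.1 * ι x u.1) (ι (T x) v)

end Dynamics

/-! ### The generalized continued fractions `c_p` and resistances `r_p` -/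

section Constants

/-- Conjugate exponent. -/
noncomputable def conjExp (p : ℝ) : ℝ := p / (p - 1)

variable {V : Type*}

/-- `cpAux chi w p m v` is the continued fraction `c_p` of the subtree of descendants of `v`
(with respect to the children map `chi`) truncated at depth `m`, with weight `w`. -/
noncomputable def cpAux (chi : V → Set V) (w : V → ℝ≥0∞) (p : ℝ) : ℕ → V → ℝ≥0∞
  | 0, _ => 0
  | m + 1, v =>
      if chi v = ∅ then 0
      else (∑' u : ↥(chi v),
              (w u.1 ^ p + cpAux chi w p m u.1 ^ p) ^ (-(conjExp p / p))) ^ (-(1 / conjExp p))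

/-- The continued fraction `c_p(V(v), w)` of order `1 < p < ∞`. -/
noncomputable def cpC (chi : V → Set V) (w : V → ℝ≥0∞) (p : ℝ) (v : V) : ℝ≥0∞ :=
  ⨆ m : ℕ, cpAux chi w p m v

/-- The resistance `r_p(V(v), w)` of order `1 < p < ∞`. -/
noncomputable def rpC (chi : V → Set V) (w : V → ℝ≥0∞) (p : ℝ) (v : V) : ℝ≥0∞ :=
  (w v ^ p + cpC chi w p v ^ p) ^ (1 / p)

/-- Truncated continued fraction of order `p = ∞`. -/
noncomputable def cInfAux (chi : V → Set V) (w : V → ℝ≥0∞) : ℕ → V → ℝ≥0∞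
  | 0, _ => 0
  | m + 1, v =>
      if chi v = ∅ then 0
      else (∑' u : ↥(chi v), (max (w u.1) (cInfAux chi w m u.1))⁻¹)⁻¹

/-- The continued fraction `c_∞(V(v), w)`. -/
noncomputable def cInfC (chi : V → Set V) (w : V → ℝ≥0∞) (v : V) : ℝ≥0∞ :=
  ⨆ m : ℕ, cInfAux chi w m v

/-- The resistance `r_∞(V(v), w)`. -/
noncomputable def rInfC (chi : V → Set V) (w : V → ℝ≥0∞) (v : V) : ℝ≥0∞ :=
  max (w v) (cInfC chi w v)

end Constants

/-! ### Concrete sequence spaces `ℓ^p(V, μ)` and `c₀(V, μ)`, up to isometry -/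

section SpaceRep

variable {𝕜 : Type*} [RCLike 𝕜] {V : Type*} {X : Type*} [NormedAddCommGroup X] [NormedSpace 𝕜 X]

/-- `X` is (an isometric copy of) the weighted space `ℓ^p(V, μ)`, the identification being
given by the coefficient embedding `ι`. -/
def IsLpSpaceRep (ι : X →ₗ[𝕜] V → 𝕜) (μ : V → 𝕜) (p : ℝ) : Prop :=
  Function.Injective ι ∧
  (∀ f : V → 𝕜, (∑' v : V, (‖f v * μ v‖₊ : ℝ≥0∞) ^ p) < ⊤ ↔ f ∈ Set.range ι) ∧
  ∀ x : X, (‖x‖₊ : ℝ≥0∞) = (∑' v : V, (‖ι x v * μ v‖₊ : ℝ≥0∞) ^ p) ^ (1 / p)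

/-- `X` is (an isometric copy of) the weighted space `c₀(V, μ)`. -/
def IsC0SpaceRep (ι : X →ₗ[𝕜] V → 𝕜) (μ : V → 𝕜) : Prop :=
  Function.Injective ι ∧
  (∀ f : V → 𝕜, (∀ ε : ℝ, 0 < ε → {v : V | ε ≤ ‖f v * μ v‖}.Finite) ↔ f ∈ Set.range ι) ∧
  ∀ x : X, (‖x‖₊ : ℝ≥0∞) = ⨆ v : V, (‖ι x v * μ v‖₊ : ℝ≥0∞)

end SpaceRep

/-!
Regard the tree as an electrical network in which a current `x` through the vertex `v` costs the
energy `|x μ v| ^ p`. Siblings are connected in parallel and each vertex is connected in series with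
the network below it, so that `c_p(V(v), μ) ^ p` is the minimal energy of a unit current that enters
the network at `v` and flows down to infinity, not counting the energy spent at `v`.

A periodic point `x` with `x v ≠ 0` gives a current of finite energy through `v`: the sum of `|y|`
over all `y` in the orbit of `x` is at each vertex at most the sum of its values at the children,
and Hölder's inequality, applied generation by generation, bounds `c_p(V(v), μ)` by its energy.

Conversely, if all `c_p(V(v), μ)` are finite, the unit current entering at the root and distributed
optimally at each vertex is a fixed vector of `B` without zero coordinates. Continuity of `B` makes
the sums of `|μ u| ^ (-p*)` over siblings finite, which the passage to the limit in the continued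
fractions requires. The restriction of the fixed vector to the `n`-th descendants of `v` is an
`n`-th preimage, tending to `0`, of its restriction to `v`. Superposing the restrictions to the
generations `0, n, 2n, …` below `v` gives periodic points that tend to the same vector, so that
the chaos criterion applies.
-/

section Tree

variable {par : V → Option V} {root u v w : V} {g : V → ℝ≥0∞} {K L : Set ℕ} {m n : ℕ}

lemma parIter_succ_of_par_eq_some (h : par u = some w) (n : ℕ) :
    parIter par (n + 1) u = parIter par n w := by
  simp [parIter, h]

lemma parIter_add (par : V → Option V) (m n : ℕ) (u : V) :
    parIter par (m + n) u = (parIter par m u).bind (parIter par n) := by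
  induction m generalizing u with
  | zero => simp [parIter]
  | succ m ih =>
    rw [Nat.succ_add]
    cases h : par u with
    | none => simp [parIter, h]
    | some w => simp only [parIter_succ_of_par_eq_some h, ih]

lemma parIter_succ_eq_some_iff :
    parIter par (n + 1) u = some v ↔ ∃ w ∈ children par v, parIter par n u = some w := by
  rw [parIter_add]
  simp [Option.bind_eq_some_iff, parIter, children, and_comm]

lemma IsDirectedTree.parIter_eq_some_inj (hTree : IsDirectedTree par)
    (hm : parIter par m u = some v) (hn : parIter par n u = some v) : m = n := by
  wlog h : m ≤ n generalizing m n with H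
  · exact (H hn hm (le_of_not_ge h)).symm
  obtain ⟨k, rfl⟩ := Nat.exists_eq_add_of_le h
  rw [parIter_add, hm] at hn
  by_contra hne
  exact hTree.acyclic v k (by lia) hn

/-- The generation of `u` in a tree with the given root, that is, the number of steps from `u` up
to `root`. It is `0` if `root` is not an ancestor of `u`. -/
noncomputable def depth (par : V → Option V) (root u : V) : ℕ :=
  sInf {n | parIter par n u = some root}

lemma depth_root : depth par root root = 0 :=
  Nat.sInf_eq_zero.2 (Or.inl rfl)

lemma IsDirectedTree.parIter_depth (hTree : IsDirectedTree par) (hroot : IsRoot par root)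
    (u : V) : parIter par (depth par root u) u = some root := by
  refine Nat.sInf_mem (s := {n | parIter par n u = some root}) ?_
  obtain ⟨m, n, w, hm, hn⟩ := hTree.connected root u
  cases m with
  | zero => exact ⟨n, hn.trans hm.symm⟩
  | succ m => simp [parIter, show par root = none from hroot] at hm

lemma IsDirectedTree.depth_of_par_eq_some (hTree : IsDirectedTree par) (hroot : IsRoot par root)
    (h : par u = some v) : depth par root u = depth par root v + 1 :=
  hTree.parIter_eq_some_inj (hTree.parIter_depth hroot u)
    ((parIter_succ_of_par_eq_some h _).trans (hTree.parIter_depth hroot v))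

lemma IsDirectedTree.parIter_eq_none_of_depth_lt (hTree : IsDirectedTree par)
    (hroot : IsRoot par root) (h : depth par root u < n) : parIter par n u = none := by
  obtain ⟨k, rfl⟩ := Nat.exists_eq_add_of_lt h
  rw [add_assoc, parIter_add, hTree.parIter_depth hroot]
  simp [parIter, show par root = none from hroot]

lemma IsDirectedTree.induction_from_root (hTree : IsDirectedTree par) (hroot : IsRoot par root)
    {motive : V → Prop} (base : motive root)
    (child : ∀ u v, par u = some v → motive v → motive u) (u : V) : motive u := by
  suffices ∀ n u, parIter par n u = some root → motive u from
    this _ u (hTree.parIter_depth hroot u)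
  intro n
  induction n with
  | zero => exact fun u hu => Option.some.inj hu ▸ base
  | succ n ih =>
    intro u hu
    cases hpar : par u with
    | none => simp [parIter, hpar] at hu
    | some v => exact child u v hpar (ih v (parIter_succ_of_par_eq_some hpar n ▸ hu))

/-- The descendants of `v` whose generation below `v` belongs to `K`. -/
def descendantsAt (par : V → Option V) (v : V) (K : Set ℕ) : Set V :=
  {u | ∃ k ∈ K, parIter par k u = some v}

lemma descendantsAt_zero : descendantsAt par v {0} = {v} := by
  ext u
  simp [descendantsAt, parIter]

lemma descendantsAt_union :
    descendantsAt par v (K ∪ L) = descendantsAt par v K ∪ descendantsAt par v L := by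
  ext u
  simp [descendantsAt, or_and_right, exists_or]

lemma mem_descendantsAt_add_one_iff (h : par u = some w) :
    u ∈ descendantsAt par v ((· + 1) '' K) ↔ w ∈ descendantsAt par v K := by
  simp [descendantsAt, parIter_succ_of_par_eq_some h]

lemma descendantsAt_add_one :
    descendantsAt par v ((· + 1) '' K) = ⋃ u ∈ children par v, descendantsAt par u K := by
  ext x
  simp only [descendantsAt, Set.exists_mem_image, parIter_succ_eq_some_iff, Set.mem_iUnion₂,
    Set.mem_ofPred_eq]
  tauto

lemma IsDirectedTree.disjoint_descendantsAt (hTree : IsDirectedTree par) (hKL : Disjoint K L) :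
    Disjoint (descendantsAt par v K) (descendantsAt par v L) := by
  refine Set.disjoint_left.2 ?_
  rintro u ⟨k, hk, hku⟩ ⟨l, hl, hlu⟩
  exact Set.disjoint_left.1 hKL hk (hTree.parIter_eq_some_inj hku hlu ▸ hl)

lemma IsDirectedTree.pairwiseDisjoint_descendantsAt (hTree : IsDirectedTree par) :
    (children par v).PairwiseDisjoint (descendantsAt par · K) := by
  intro a ha b hb hab
  refine Set.disjoint_left.2 ?_
  rintro x ⟨k, -, hka⟩ ⟨l, -, hlb⟩
  have hkl : k + 1 = l + 1 := hTree.parIter_eq_some_inj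
    (parIter_succ_eq_some_iff.2 ⟨a, ha, hka⟩) (parIter_succ_eq_some_iff.2 ⟨b, hb, hlb⟩)
  rw [Nat.add_right_cancel hkl, hlb] at hka
  exact hab (Option.some.inj hka).symm

lemma IsDirectedTree.eventually_notMem_descendantsAt (hTree : IsDirectedTree par) {K : ℕ → Set ℕ}
    (hK : ∀ n, ∀ k ∈ K n, n ≤ k) (v u : V) : ∀ᶠ n in atTop, u ∉ descendantsAt par v (K n) := by
  by_cases hu : ∃ k, parIter par k u = some v
  · obtain ⟨k, hk⟩ := hu
    filter_upwards [eventually_gt_atTop k] with n hn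
    rintro ⟨l, hl, hlu⟩
    exact (hn.trans_le (hK n l hl)).ne (hTree.parIter_eq_some_inj hk hlu)
  · exact .of_forall fun n ⟨k, _, hk⟩ => hu ⟨k, hk⟩

/-- The sum of `g` over the first `m + 1` generations of the subtree rooted at `v`, in the
recursive form in which it is compared with continued fractions. -/
noncomputable def subtreeSum (par : V → Option V) (g : V → ℝ≥0∞) : ℕ → V → ℝ≥0∞
  | 0, v => g v
  | m + 1, v => g v + ∑' u : ↥(children par v), subtreeSum par g m u

lemma IsDirectedTree.subtreeSum_eq_tsum (hTree : IsDirectedTree par) (g : V → ℝ≥0∞) (m : ℕ)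
    (v : V) : subtreeSum par g m v = ∑' u : ↥(descendantsAt par v (Set.Iic m)), g u := by
  induction m generalizing v with
  | zero =>
    have hIic : Set.Iic 0 = ({0} : Set ℕ) := Set.Iic_bot
    rw [hIic, descendantsAt_zero, tsum_singleton, subtreeSum]
  | succ m ih =>
    have hIic : Set.Iic (m + 1) = {0} ∪ (· + 1) '' Set.Iic m := by
      ext (_ | k) <;> simp
    have hdisj : Disjoint ({0} : Set ℕ) ((· + 1) '' Set.Iic m) := by simp
    rw [hIic, descendantsAt_union, ENNReal.summable.tsum_union_disjoint
      (hTree.disjoint_descendantsAt hdisj) ENNReal.summable, descendantsAt_zero, tsum_singleton,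
      descendantsAt_add_one, ENNReal.tsum_biUnion' hTree.pairwiseDisjoint_descendantsAt]
    simp only [subtreeSum, ih]

lemma IsDirectedTree.subtreeSum_le_tsum (hTree : IsDirectedTree par) (g : V → ℝ≥0∞) (m : ℕ)
    (v : V) : subtreeSum par g m v ≤ ∑' u, g u := by
  rw [hTree.subtreeSum_eq_tsum]
  exact ENNReal.tsum_comp_le_tsum_of_injective Subtype.val_injective g

lemma IsDirectedTree.tsum_le_of_subtreeSum_le (hTree : IsDirectedTree par)
    (hroot : IsRoot par root) {C : ℝ≥0∞} (hC : ∀ m, subtreeSum par g m root ≤ C) :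
    ∑' u, g u ≤ C := by
  rw [ENNReal.tsum_eq_iSup_sum]
  refine iSup_le fun F => ?_
  have hF : ∀ u ∈ F, u ∈ descendantsAt par root (Set.Iic (F.sup (depth par root))) :=
    fun u hu => ⟨depth par root u, Set.mem_Iic.2 (Finset.le_sup (f := depth par root) hu),
      hTree.parIter_depth hroot u⟩
  calc ∑ u ∈ F, g u
      = ∑ u ∈ F, (descendantsAt par root (Set.Iic (F.sup (depth par root)))).indicator g u :=
        Finset.sum_congr rfl fun u hu => (Set.indicator_of_mem (hF u hu) g).symm
    _ ≤ subtreeSum par g (F.sup (depth par root)) root := by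
        rw [hTree.subtreeSum_eq_tsum, tsum_subtype]
        exact ENNReal.sum_le_tsum F
    _ ≤ C := hC _

lemma IsDirectedTree.tsum_le_add_of_tsum_children_le (hTree : IsDirectedTree par)
    (hroot : IsRoot par root) {a e : V → ℝ≥0∞}
    (h : ∀ v, ∑' u : ↥(children par v), (a u + e u) ≤ e v) : ∑' u, a u ≤ a root + e root := by
  refine hTree.tsum_le_of_subtreeSum_le hroot fun m => ?_
  suffices ∀ v, subtreeSum par a m v ≤ a v + e v from this root
  induction m with
  | zero => exact fun v => le_self_add
  | succ m ih =>
    intro v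
    rw [subtreeSum]
    gcongr
    exact (ENNReal.tsum_le_tsum fun u : ↥(children par v) => ih u).trans (h v)

end Tree

section ParallelConnection

variable {α : Type*} {p q : ℝ} {r s H : α → ℝ≥0∞}

lemma tsum_mul_le_Lp_mul_Lq (hpq : p.HolderConjugate q) (f g : α → ℝ≥0∞) :
    ∑' a, f a * g a ≤ (∑' a, f a ^ p) ^ (1 / p) * (∑' a, g a ^ q) ^ (1 / q) := by
  let _ : MeasurableSpace α := ⊤
  have hHolder := ENNReal.lintegral_mul_le_Lp_mul_Lq MeasureTheory.Measure.count hpq (f := f)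
    (g := g) measurable_from_top.aemeasurable measurable_from_top.aemeasurable
  simpa [MeasureTheory.lintegral_count] using hHolder

lemma tendsto_tsum_of_dominated {F : ℕ → α → ℝ≥0∞} {f bound : α → ℝ≥0∞}
    (hbound : ∀ n a, F n a ≤ bound a) (hfin : ∑' a, bound a ≠ ⊤)
    (hlim : ∀ a, Tendsto (fun n => F n a) atTop (𝓝 (f a))) :
    Tendsto (fun n => ∑' a, F n a) atTop (𝓝 (∑' a, f a)) := by
  let _ : MeasurableSpace α := ⊤
  have hconv := MeasureTheory.tendsto_lintegral_of_dominated_convergence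
    (μ := MeasureTheory.Measure.count) bound (fun _ => measurable_from_top)
    (fun n => .of_forall (hbound n)) (by simpa [MeasureTheory.lintegral_count] using hfin)
    (.of_forall hlim)
  simpa [MeasureTheory.lintegral_count] using hconv

/-- The resistance of the parallel connection of the nonlinear resistors `r a`, in which a current
`x` through `r a` costs the energy `(x * r a) ^ p`. It is expressed by the conjugate exponent `q`
of `p`. -/
noncomputable def parallel (q : ℝ) (r : α → ℝ≥0∞) : ℝ≥0∞ :=
  (∑' a, r a ^ (-q)) ^ (-(1 / q))

/-- The fraction of the current that passes through the resistor `r a` of a parallel connection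
when the total energy is minimal. -/
noncomputable def share (q : ℝ) (r : α → ℝ≥0∞) (a : α) : ℝ≥0∞ :=
  r a ^ (-q) / ∑' b, r b ^ (-q)

lemma parallel_mono (hq : 0 ≤ q) (h : r ≤ s) : parallel q r ≤ parallel q s := by
  simp only [parallel, ENNReal.rpow_neg]
  gcongr
  exact h _

lemma tendsto_parallel (hq : 0 ≤ q) {R : ℕ → α → ℝ≥0∞} (hbound : ∀ n a, s a ≤ R n a)
    (hfin : ∑' a, s a ^ (-q) ≠ ⊤) (hlim : ∀ a, Tendsto (fun n => R n a) atTop (𝓝 (r a))) :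
    Tendsto (fun n => parallel q (R n)) atTop (𝓝 (parallel q r)) := by
  refine (ENNReal.continuous_rpow_const.tendsto _).comp (tendsto_tsum_of_dominated (fun n a => ?_)
    hfin fun a => (ENNReal.continuous_rpow_const.tendsto _).comp (hlim a))
  simp only [ENNReal.rpow_neg]
  gcongr
  exact hbound n a

lemma parallel_mul_tsum_rpow_le (hpq : p.HolderConjugate q) (hr : ∀ a, r a ≠ 0) :
    (parallel q r * ∑' a, H a) ^ p ≤ ∑' a, (H a * r a) ^ p := by
  by_cases hE : ∑' a, (H a * r a) ^ p = ⊤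
  · exact hE ▸ le_top
  have hHr : ∀ a, H a ≤ H a * r a * (r a)⁻¹ := by
    intro a
    by_cases hra : r a = ⊤
    · have hfin : (H a * r a) ^ p ≠ ⊤ := ENNReal.ne_top_of_tsum_ne_top hE a
      have hHa : H a = 0 := by
        by_contra hHa
        exact hfin (by rw [hra, ENNReal.mul_top hHa, ENNReal.top_rpow_of_pos hpq.pos])
      simp [hHa]
    · rw [mul_assoc, ENNReal.mul_inv_cancel (hr a) hra, mul_one]
  set S := (∑' a, r a ^ (-q)) ^ (1 / q) with hS
  have hsum : ∑' a, H a ≤ (∑' a, (H a * r a) ^ p) ^ (1 / p) * S :=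
    calc ∑' a, H a ≤ ∑' a, H a * r a * (r a)⁻¹ := ENNReal.tsum_le_tsum hHr
      _ ≤ (∑' a, (H a * r a) ^ p) ^ (1 / p) * (∑' a, (r a)⁻¹ ^ q) ^ (1 / q) :=
        tsum_mul_le_Lp_mul_Lq hpq _ _
      _ = (∑' a, (H a * r a) ^ p) ^ (1 / p) * S := by
        simp only [hS, ENNReal.rpow_neg, ENNReal.inv_rpow]
  rw [← ENNReal.le_rpow_inv_iff hpq.pos]
  calc parallel q r * ∑' a, H a ≤ S⁻¹ * ((∑' a, (H a * r a) ^ p) ^ (1 / p) * S) := by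
        rw [parallel, ENNReal.rpow_neg]
        gcongr
    _ = S⁻¹ * S * (∑' a, (H a * r a) ^ p) ^ (1 / p) := by ring
    _ ≤ 1 * (∑' a, (H a * r a) ^ p) ^ (1 / p) := by gcongr; exact ENNReal.inv_mul_le_one S
    _ = (∑' a, (H a * r a) ^ p) ^ p⁻¹ := by rw [one_mul, one_div]

lemma tsum_share (h0 : ∑' a, r a ^ (-q) ≠ 0) (hfin : ∑' a, r a ^ (-q) ≠ ⊤) :
    ∑' a, share q r a = 1 := by
  simp only [share, div_eq_mul_inv, ENNReal.tsum_mul_right, ENNReal.mul_inv_cancel h0 hfin]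

lemma tsum_share_mul_rpow (hpq : p.HolderConjugate q) (hr0 : ∀ a, r a ≠ 0)
    (h0 : ∑' a, r a ^ (-q) ≠ 0) (hfin : ∑' a, r a ^ (-q) ≠ ⊤) :
    ∑' a, (share q r a * r a) ^ p = parallel q r ^ p := by
  set S := ∑' a, r a ^ (-q) with hS
  have hmul : ∀ a, r a ^ (-q) * r a = r a ^ (-q + 1) := by
    intro a
    by_cases hra : r a = ⊤
    · simp [hra, hpq.symm.pos, hpq.symm.lt]
    · rw [ENNReal.rpow_add _ _ (hr0 a) hra, ENNReal.rpow_one]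
  have hpow : (-q + 1) * p = -q := by linarith [hpq.mul_eq_add]
  have hterm : ∀ a, (share q r a * r a) ^ p = r a ^ (-q) * S ^ (-p) := by
    intro a
    rw [share, ← hS, div_eq_mul_inv, mul_right_comm, hmul,
      ENNReal.mul_rpow_of_nonneg _ _ hpq.nonneg, ← ENNReal.rpow_mul, hpow, ENNReal.inv_rpow,
      ENNReal.rpow_neg S]
  have hexp : 1 + -p = -(1 / q) * p := by
    have := hpq.symm.ne_zero
    field_simp
    linarith [hpq.mul_eq_add]
  calc ∑' a, (share q r a * r a) ^ p = S ^ (1 : ℝ) * S ^ (-p) := by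
        rw [tsum_congr hterm, ENNReal.tsum_mul_right, ENNReal.rpow_one]
    _ = parallel q r ^ p := by
        rw [← ENNReal.rpow_add _ _ h0 hfin, hexp, ENNReal.rpow_mul, parallel, hS]

end ParallelConnection

section ContinuedFraction

variable {chi : V → Set V} {v : V} {w : V → ℝ≥0∞} {p : ℝ} {m : ℕ}

lemma holderConjugate_conjExp (hp : 1 < p) : p.HolderConjugate (conjExp p) :=
  .conjExponent hp

lemma mul_rpow_add_rpow_rpow (hp : 0 < p) (x a b : ℝ≥0∞) :
    (x * (a ^ p + b ^ p) ^ (1 / p)) ^ p = (x * a) ^ p + (x * b) ^ p := by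
  simp only [ENNReal.mul_rpow_of_nonneg _ _ hp.le, ← ENNReal.rpow_mul, one_div,
    inv_mul_cancel₀ hp.ne', ENNReal.rpow_one, mul_add]

lemma le_rpow_add_rpow (hp : 0 < p) (a b : ℝ≥0∞) : a ≤ (a ^ p + b ^ p) ^ (1 / p) := by
  rw [one_div, ENNReal.le_rpow_inv_iff hp]
  exact le_self_add

/-- The resistance `r_p` of the subtree of descendants of `v` truncated at depth `m`. -/
noncomputable def rpAux (chi : V → Set V) (w : V → ℝ≥0∞) (p : ℝ) (m : ℕ) (v : V) : ℝ≥0∞ :=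
  (w v ^ p + cpAux chi w p m v ^ p) ^ (1 / p)

lemma cpAux_succ (hv : chi v ≠ ∅) :
    cpAux chi w p (m + 1) v =
      parallel (conjExp p) fun u : ↥(chi v) => rpAux chi w p m u := by
  simp only [cpAux, if_neg hv, parallel, rpAux, ← ENNReal.rpow_mul]
  ring_nf

lemma monotone_cpAux (hp : 1 < p) (hchi : ∀ v, chi v ≠ ∅) : Monotone (cpAux chi w p) := by
  have hpq := holderConjugate_conjExp hp
  refine monotone_nat_of_le_succ fun m => ?_
  induction m with
  | zero => exact fun v => zero_le
  | succ m ih =>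
    intro v
    rw [cpAux_succ (hchi v), cpAux_succ (hchi v)]
    refine parallel_mono hpq.symm.nonneg fun u => ?_
    have := hpq.pos
    simp only [rpAux]
    gcongr
    exact ih u

lemma tendsto_cpAux (hp : 1 < p) (hchi : ∀ v, chi v ≠ ∅) (v : V) :
    Tendsto (fun m => cpAux chi w p m v) atTop (𝓝 (cpC chi w p v)) :=
  tendsto_atTop_iSup fun _ _ hmn => monotone_cpAux hp hchi hmn v

lemma tendsto_rpAux (hp : 1 < p) (hchi : ∀ v, chi v ≠ ∅) (v : V) :
    Tendsto (fun m => rpAux chi w p m v) atTop (𝓝 (rpC chi w p v)) :=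
  (ENNReal.continuous_rpow_const.tendsto _).comp (tendsto_const_nhds.add
    ((ENNReal.continuous_rpow_const.tendsto _).comp (tendsto_cpAux hp hchi v)))

lemma cpC_eq_parallel (hp : 1 < p) (hchi : ∀ v, chi v ≠ ∅)
    (hsum : ∑' u : ↥(chi v), w u ^ (-conjExp p) ≠ ⊤) :
    cpC chi w p v = parallel (conjExp p) fun u : ↥(chi v) => rpC chi w p u := by
  have hpq := holderConjugate_conjExp hp
  refine tendsto_nhds_unique ((tendsto_add_atTop_iff_nat 1).2 (tendsto_cpAux hp hchi v)) ?_
  simp only [cpAux_succ (hchi v)]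
  exact tendsto_parallel hpq.symm.nonneg (fun m u => le_rpow_add_rpow hpq.pos _ _) hsum
    fun u => tendsto_rpAux hp hchi u

end ContinuedFraction

section Flow

variable {par : V → Option V} {root u v : V} {w H s r : V → ℝ≥0∞} {p q : ℝ}

/-- A nonnegative function on a tree whose value at each vertex is at most the sum of its values at
the children: a current that may receive additional inflow below every vertex. -/
def IsSubflow (par : V → Option V) (H : V → ℝ≥0∞) : Prop :=
  ∀ v, H v ≤ ∑' u : ↥(children par v), H u

/-- A nonnegative current through a tree, conserved at every vertex (Kirchhoff's law). -/
def IsFlow (par : V → Option V) (H : V → ℝ≥0∞) : Prop :=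
  ∀ v, H v = ∑' u : ↥(children par v), H u

/-- The `p`-th power of the `ℓ^p(V, w)`-norm, seen as the energy of a current `H` through the
resistors `w`. -/
noncomputable def energy (p : ℝ) (w H : V → ℝ≥0∞) : ℝ≥0∞ :=
  ∑' v, (H v * w v) ^ p

lemma ne_top_of_energy_ne_top (hp : 0 < p) (hE : energy p w H ≠ ⊤) (hv : w v ≠ 0) :
    H v ≠ ⊤ := by
  intro hHv
  refine ENNReal.ne_top_of_tsum_ne_top hE v ?_
  rw [hHv, ENNReal.top_mul hv, ENNReal.top_rpow_of_pos hp]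

lemma IsSubflow.rpow_add_rpow_le_subtreeSum (hH : IsSubflow par H) (hp : 1 < p)
    (hLeafless : Leafless par) (hw : ∀ v, w v ≠ 0) (m : ℕ) (v : V) :
    (H v * w v) ^ p + (H v * cpAux (children par) w p m v) ^ p ≤
      subtreeSum par (fun u => (H u * w u) ^ p) m v := by
  have hpq := holderConjugate_conjExp hp
  have := hpq.pos
  induction m generalizing v with
  | zero => simp [cpAux, subtreeSum, hpq.pos]
  | succ m ih =>
    let R (u : ↥(children par v)) : ℝ≥0∞ := rpAux (children par) w p m u
    have hR (u : ↥(children par v)) : R u ≠ 0 :=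
      ne_bot_of_le_ne_bot (hw u) (le_rpow_add_rpow hpq.pos _ _)
    rw [subtreeSum, cpAux_succ (hLeafless v), mul_comm (H v) (parallel _ _)]
    gcongr
    calc (parallel (conjExp p) R * H v) ^ p
        ≤ (parallel (conjExp p) R * ∑' u : ↥(children par v), H u) ^ p := by gcongr; exact hH v
      _ ≤ ∑' u : ↥(children par v), (H u * R u) ^ p := parallel_mul_tsum_rpow_le hpq hR
      _ = ∑' u : ↥(children par v),
            ((H u * w u) ^ p + (H u * cpAux (children par) w p m u) ^ p) :=
          tsum_congr fun u => mul_rpow_add_rpow_rpow hpq.pos _ _ _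
      _ ≤ ∑' u : ↥(children par v), subtreeSum par (fun u => (H u * w u) ^ p) m u :=
          ENNReal.tsum_le_tsum fun u => ih u

lemma IsSubflow.cpC_lt_top (hH : IsSubflow par H) (hTree : IsDirectedTree par)
    (hLeafless : Leafless par) (hp : 1 < p) (hw : ∀ v, w v ≠ 0) (hE : energy p w H ≠ ⊤)
    (hv : H v ≠ 0) : cpC (children par) w p v < ⊤ := by
  have hp0 : 0 < p := zero_lt_one.trans hp
  have hE' : energy p w H ^ p⁻¹ ≠ ⊤ := ENNReal.rpow_ne_top_of_nonneg (by positivity) hE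
  have hle : cpC (children par) w p v ≤ energy p w H ^ p⁻¹ / H v := by
    refine iSup_le fun m => ?_
    rw [ENNReal.le_div_iff_mul_le (.inl hv) (.inr hE'), mul_comm, ENNReal.le_rpow_inv_iff hp0]
    calc (H v * cpAux (children par) w p m v) ^ p
        ≤ subtreeSum par (fun u => (H u * w u) ^ p) m v :=
          le_add_self.trans (hH.rpow_add_rpow_le_subtreeSum hp hLeafless hw m v)
      _ ≤ energy p w H := hTree.subtreeSum_le_tsum _ _ _
  exact hle.trans_lt (ENNReal.div_lt_top hE' hv)

/-- The current that enters a tree at `root` with strength `1` and of which, at each vertex `v`,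
the fraction `s u` goes on to the child `u` of `v`. -/
noncomputable def splitFlow (par : V → Option V) (root : V) (s : V → ℝ≥0∞) (u : V) : ℝ≥0∞ :=
  pathProd par s (depth par root u) u

lemma splitFlow_root : splitFlow par root s root = 1 := by
  rw [splitFlow, depth_root, pathProd]

lemma IsDirectedTree.splitFlow_of_par_eq_some (hTree : IsDirectedTree par)
    (hroot : IsRoot par root) (h : par u = some v) :
    splitFlow par root s u = s u * splitFlow par root s v := by
  rw [splitFlow, hTree.depth_of_par_eq_some hroot h, pathProd, h, Option.elim_some, splitFlow]

lemma IsDirectedTree.isFlow_splitFlow (hTree : IsDirectedTree par) (hroot : IsRoot par root)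
    (hs : ∀ v, ∑' u : ↥(children par v), s u = 1) : IsFlow par (splitFlow par root s) := by
  intro v
  rw [tsum_congr fun u : ↥(children par v) => hTree.splitFlow_of_par_eq_some hroot u.2,
    ENNReal.tsum_mul_right, hs, one_mul]

lemma IsDirectedTree.splitFlow_ne_zero (hTree : IsDirectedTree par) (hroot : IsRoot par root)
    (hs : ∀ v, ∀ u : ↥(children par v), s u ≠ 0) (u : V) : splitFlow par root s u ≠ 0 := by
  induction u using hTree.induction_from_root hroot with
  | base => simp [splitFlow_root]
  | child u v huv ih =>
    rw [hTree.splitFlow_of_par_eq_some hroot huv]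
    exact mul_ne_zero (hs v ⟨u, huv⟩) ih

lemma IsDirectedTree.energy_splitFlow_le (hTree : IsDirectedTree par) (hroot : IsRoot par root)
    (hp : 0 < p) {c : V → ℝ≥0∞} (hs : ∀ v, ∑' u : ↥(children par v),
      (s u * (w u ^ p + c u ^ p) ^ (1 / p)) ^ p ≤ c v ^ p) :
    energy p w (splitFlow par root s) ≤ w root ^ p + c root ^ p := by
  let P := splitFlow par root s
  have hchildren (v : V) :
      ∑' u : ↥(children par v), ((P u * w u) ^ p + (P u * c u) ^ p) ≤ (P v * c v) ^ p :=
    calc ∑' u : ↥(children par v), ((P u * w u) ^ p + (P u * c u) ^ p)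
        = ∑' u : ↥(children par v), P v ^ p * (s u * (w u ^ p + c u ^ p) ^ (1 / p)) ^ p := by
          refine tsum_congr fun u => ?_
          rw [← mul_rpow_add_rpow_rpow hp, ← ENNReal.mul_rpow_of_nonneg _ _ hp.le,
            show P u = s u * P v from hTree.splitFlow_of_par_eq_some hroot u.2, mul_left_comm,
            mul_assoc]
      _ ≤ (P v * c v) ^ p := by
          rw [ENNReal.tsum_mul_left, ENNReal.mul_rpow_of_nonneg _ _ hp.le]
          gcongr
          exact hs v
  have hE := hTree.tsum_le_add_of_tsum_children_le hroot (a := fun u => (P u * w u) ^ p)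
    (e := fun u => (P u * c u) ^ p) hchildren
  simpa only [energy, P, splitFlow_root, one_mul] using hE

/-- The splitting fractions under which the current through a tree distributes itself optimally
among subtrees of resistances `r u`: siblings act as resistors in parallel. -/
noncomputable def optimalSplit (par : V → Option V) (q : ℝ) (r : V → ℝ≥0∞) (u : V) : ℝ≥0∞ :=
  r u ^ (-q) / ∑' a : ↥{a | par a = par u}, r a ^ (-q)

lemma optimalSplit_eq_share (u : ↥(children par v)) :
    optimalSplit par q r u = share q (fun a : ↥(children par v) => r a) u := by
  rw [optimalSplit, show par u = some v from u.2]
  rfl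

lemma IsDirectedTree.exists_flow_of_cpC_lt_top (hTree : IsDirectedTree par)
    (hroot : IsRoot par root) (hLeafless : Leafless par) (hp : 1 < p)
    (hw0 : ∀ v, w v ≠ 0) (hw : ∀ v, w v ≠ ⊤)
    (hsum : ∀ v, ∑' u : ↥(children par v), w u ^ (-conjExp p) ≠ ⊤)
    (hc : ∀ v, cpC (children par) w p v < ⊤) :
    ∃ P : V → ℝ≥0∞, IsFlow par P ∧ (∀ v, P v ≠ 0) ∧ energy p w P ≠ ⊤ := by
  have hpq := holderConjugate_conjExp hp
  let r := rpC (children par) w p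
  let q := conjExp p
  have hwr (v : V) : w v ≤ r v := le_rpow_add_rpow hpq.pos _ _
  have hr0 (v : V) : r v ≠ 0 := ne_bot_of_le_ne_bot (hw0 v) (hwr v)
  have hr (v : V) : r v ≠ ⊤ := by simp [r, rpC, hpq.pos, hpq.nonneg, hw v, (hc v).ne]
  have hrq (v : V) : r v ^ (-q) ≠ 0 :=
    (ENNReal.rpow_pos (pos_iff_ne_zero.2 (hr0 v)) (hr v)).ne'
  have hS0 (v : V) : ∑' u : ↥(children par v), r u ^ (-q) ≠ 0 := by
    obtain ⟨u, hu⟩ := Set.nonempty_iff_ne_empty.2 (hLeafless v)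
    exact fun h => hrq u (ENNReal.tsum_eq_zero.1 h ⟨u, hu⟩)
  have hS (v : V) : ∑' u : ↥(children par v), r u ^ (-q) ≠ ⊤ := by
    refine ne_top_of_le_ne_top (hsum v) (ENNReal.tsum_le_tsum fun u => ?_)
    simp only [ENNReal.rpow_neg, ENNReal.inv_le_inv]
    exact ENNReal.rpow_le_rpow (hwr u) hpq.symm.nonneg
  refine ⟨splitFlow par root (optimalSplit par q r), hTree.isFlow_splitFlow hroot fun v => ?_,
    hTree.splitFlow_ne_zero hroot fun v u => ?_, ne_top_of_le_ne_top ?_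
      (hTree.energy_splitFlow_le (c := cpC (children par) w p) hroot hpq.pos fun v => ?_)⟩
  · simp only [optimalSplit_eq_share, tsum_share (hS0 v) (hS v)]
  · rw [optimalSplit_eq_share]
    exact ENNReal.div_ne_zero.2 ⟨hrq u, hS v⟩
  · simp [hpq.nonneg, hw root, (hc root).ne]
  · rw [cpC_eq_parallel hp hLeafless (hsum v), ← tsum_share_mul_rpow
      (r := fun u : ↥(children par v) => r u) hpq (fun u => hr0 u) (hS0 v) (hS v)]
    simp only [optimalSplit_eq_share]
    rfl

end Flow

section LinearDynamics

lemma exists_dense_range_of_dense_iUnion_preimage {X Y : Type*} [TopologicalSpace X]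
    [TopologicalSpace Y] [BaireSpace X] [Nonempty X] [SecondCountableTopology Y] {f : ℕ → X → Y}
    (hf : ∀ n, Continuous (f n))
    (hdense : ∀ U : Set Y, IsOpen U → U.Nonempty → Dense (⋃ n, f n ⁻¹' U)) :
    ∃ x, Dense (Set.range fun n => f n x) := by
  have hbasis := TopologicalSpace.isBasis_countableBasis Y
  have hinter : Dense (⋂ U ∈ TopologicalSpace.countableBasis Y, ⋃ n, f n ⁻¹' U) :=
    dense_biInter_of_isOpen
      (fun U hU => isOpen_iUnion fun n => (hbasis.isOpen hU).preimage (hf n))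
      (TopologicalSpace.countable_countableBasis Y)
      fun U hU => hdense U (hbasis.isOpen hU) (TopologicalSpace.nonempty_of_mem_countableBasis hU)
  obtain ⟨x, hx⟩ := hinter.nonempty
  refine ⟨x, hbasis.dense_iff.2 fun U hU _ => ?_⟩
  obtain ⟨n, hn⟩ := Set.mem_iUnion.1 (Set.mem_iInter₂.1 hx U hU)
  exact ⟨f n x, hn, n, rfl⟩

variable {𝕜 : Type*} [RCLike 𝕜] {X : Type*} [AddCommGroup X] [Module 𝕜 X] [TopologicalSpace X]

lemma secondCountableTopology_of_dense_span {Y : Type*} [NormedAddCommGroup Y] [NormedSpace 𝕜 Y]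
    {G : Set Y} (hG : G.Countable) (hdense : Dense (Submodule.span 𝕜 G : Set Y)) :
    SecondCountableTopology Y := by
  have hsep : TopologicalSpace.SeparableSpace Y := TopologicalSpace.isSeparable_univ_iff.1
    (hdense.closure_eq ▸ (hG.isSeparable.span (R := 𝕜)).closure)
  exact UniformSpace.secondCountable_of_separable Y

/-- The vectors `y` required by the chaos criterion: the orbit of `y` reaches `0`, the vector `y`
has `n`-th preimages tending to `0`, and it is the limit of periodic points. -/
structure IsChaosVector (T : X →L[𝕜] X) (y : X) : Prop where
  eventually_pow_apply_eq_zero : ∀ᶠ n in atTop, (T ^ n) y = 0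
  exists_preimages : ∃ s : ℕ → X, Tendsto s atTop (𝓝 0) ∧ ∀ᶠ n in atTop, (T ^ n) (s n) = y
  exists_periodic : ∃ s : ℕ → X, Tendsto s atTop (𝓝 y) ∧ ∀ᶠ n in atTop, (T ^ n) (s n) = s n

lemma isChaosVector_zero (T : X →L[𝕜] X) : IsChaosVector T 0 where
  eventually_pow_apply_eq_zero := .of_forall fun _ => map_zero _
  exists_preimages := ⟨0, tendsto_const_nhds, .of_forall fun _ => map_zero _⟩
  exists_periodic := ⟨0, tendsto_const_nhds, .of_forall fun _ => map_zero _⟩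

lemma IsChaosVector.add [ContinuousAdd X] {T : X →L[𝕜] X} {x y : X} (hx : IsChaosVector T x)
    (hy : IsChaosVector T y) : IsChaosVector T (x + y) where
  eventually_pow_apply_eq_zero := by
    filter_upwards [hx.eventually_pow_apply_eq_zero, hy.eventually_pow_apply_eq_zero] with n hxn hyn
    rw [map_add, hxn, hyn, add_zero]
  exists_preimages := by
    obtain ⟨s, hs, hTs⟩ := hx.exists_preimages
    obtain ⟨t, ht, hTt⟩ := hy.exists_preimages
    refine ⟨fun n => s n + t n, by simpa only [add_zero] using hs.add ht, ?_⟩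
    filter_upwards [hTs, hTt] with n hsn htn
    rw [map_add, hsn, htn]
  exists_periodic := by
    obtain ⟨s, hs, hTs⟩ := hx.exists_periodic
    obtain ⟨t, ht, hTt⟩ := hy.exists_periodic
    refine ⟨fun n => s n + t n, hs.add ht, ?_⟩
    filter_upwards [hTs, hTt] with n hsn htn
    rw [map_add, hsn, htn]

lemma IsChaosVector.smul [ContinuousConstSMul 𝕜 X] {T : X →L[𝕜] X} {y : X}
    (hy : IsChaosVector T y) (c : 𝕜) : IsChaosVector T (c • y) where
  eventually_pow_apply_eq_zero := by
    filter_upwards [hy.eventually_pow_apply_eq_zero] with n hyn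
    rw [map_smul, hyn, smul_zero]
  exists_preimages := by
    obtain ⟨s, hs, hTs⟩ := hy.exists_preimages
    refine ⟨fun n => c • s n, by simpa only [smul_zero] using hs.const_smul c, ?_⟩
    filter_upwards [hTs] with n hsn
    rw [map_smul, hsn]
  exists_periodic := by
    obtain ⟨s, hs, hTs⟩ := hy.exists_periodic
    refine ⟨fun n => c • s n, hs.const_smul c, ?_⟩
    filter_upwards [hTs] with n hsn
    rw [map_smul, hsn]

lemma hypercyclic_of_dense_isChaosVector [ContinuousAdd X] [BaireSpace X]
    [SecondCountableTopology X] {T : X →L[𝕜] X} (hdense : Dense {y | IsChaosVector T y}) :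
    Hypercyclic T := by
  refine exists_dense_range_of_dense_iUnion_preimage (fun n => (T ^ n).continuous)
    fun U hU hUne => dense_iff_inter_open.2 fun W hW hWne => ?_
  obtain ⟨x, hxW, hx⟩ := hdense.inter_open_nonempty W hW hWne
  obtain ⟨y, hyU, hy⟩ := hdense.inter_open_nonempty U hU hUne
  obtain ⟨s, hs, hTs⟩ := hy.exists_preimages
  have hxs : Tendsto (fun n => x + s n) atTop (𝓝 x) := by
    simpa only [add_zero] using hs.const_add x
  obtain ⟨n, hxn, hsn, hxsn⟩ := (hx.eventually_pow_apply_eq_zero.and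
    (hTs.and (hxs.eventually_mem (hW.mem_nhds hxW)))).exists
  refine ⟨x + s n, hxsn, Set.mem_iUnion.2 ⟨n, ?_⟩⟩
  rwa [Set.mem_preimage, map_add, hxn, hsn, zero_add]

lemma dense_isPeriodicPoint_of_dense_isChaosVector {T : X →L[𝕜] X}
    (hdense : Dense {y | IsChaosVector T y}) : Dense {x | IsPeriodicPoint T x} := by
  refine dense_iff_inter_open.2 fun W hW hWne => ?_
  obtain ⟨x, hxW, hx⟩ := hdense.inter_open_nonempty W hW hWne
  obtain ⟨s, hs, hTs⟩ := hx.exists_periodic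
  obtain ⟨n, hsn, hTsn, hn⟩ := ((hs.eventually_mem (hW.mem_nhds hxW)).and
    (hTs.and (eventually_ge_atTop 1))).exists
  exact ⟨s n, hsn, n, hn, hTsn⟩

lemma chaoticOp_of_forall_mem_isChaosVector [ContinuousAdd X] [ContinuousConstSMul 𝕜 X]
    [BaireSpace X] [SecondCountableTopology X] {T : X →L[𝕜] X} {G : Set X}
    (hG : ∀ y ∈ G, IsChaosVector T y) (hdense : Dense (Submodule.span 𝕜 G : Set X)) :
    ChaoticOp T := by
  have hspan : Dense {y | IsChaosVector T y} := hdense.mono fun y hy =>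
    Submodule.span_induction hG (isChaosVector_zero T) (fun _ _ _ _ => .add)
      (fun c _ _ hy => hy.smul c) hy
  exact ⟨hypercyclic_of_dense_isChaosVector hspan,
    dense_isPeriodicPoint_of_dense_isChaosVector hspan⟩

end LinearDynamics

section LpSpace

variable {𝕜 : Type*} [RCLike 𝕜] {X : Type*} [NormedAddCommGroup X] [NormedSpace 𝕜 X]
  {ι : X →ₗ[𝕜] V → 𝕜} {μ : V → 𝕜} {p : ℝ} {A B : Set V}

lemma energy_indicator (hp : 0 < p) (w H : V → ℝ≥0∞) (A : Set V) :
    energy p w (A.indicator H) = ∑' a : ↥A, (H a * w a) ^ p := by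
  rw [energy, tsum_subtype A fun v => (H v * w v) ^ p]
  refine tsum_congr fun v => ?_
  by_cases hv : v ∈ A <;> simp [hv, hp]

lemma IsLpSpaceRep.mem_range_iff (hX : IsLpSpaceRep ι μ p) {f : V → 𝕜} :
    f ∈ Set.range ι ↔ energy p (nw μ) (fun v => ‖f v‖ₑ) ≠ ⊤ := by
  simp only [← hX.2.1, ← enorm_eq_nnnorm, enorm_mul, lt_top_iff_ne_top]
  rfl

lemma IsLpSpaceRep.enorm_rpow (hX : IsLpSpaceRep ι μ p) (hp : 0 < p) (x : X) :
    ‖x‖ₑ ^ p = energy p (nw μ) (fun v => ‖ι x v‖ₑ) := by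
  rw [enorm_eq_nnnorm, hX.2.2 x, one_div, ENNReal.rpow_inv_rpow hp.ne']
  simp only [← enorm_eq_nnnorm, enorm_mul]
  rfl

lemma IsLpSpaceRep.energy_ne_top (hX : IsLpSpaceRep ι μ p) (x : X) :
    energy p (nw μ) (fun v => ‖ι x v‖ₑ) ≠ ⊤ :=
  hX.mem_range_iff.1 ⟨x, rfl⟩

lemma IsLpSpaceRep.energy_sum_ne_top (hX : IsLpSpaceRep ι μ p) (hp : 1 ≤ p) {α : Type*}
    (F : Finset α) (x : α → X) : energy p (nw μ) (fun v => ∑ a ∈ F, ‖ι (x a) v‖ₑ) ≠ ⊤ := by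
  have hle (v : V) : ((∑ a ∈ F, ‖ι (x a) v‖ₑ) * nw μ v) ^ p ≤
      F.card ^ (p - 1) * ∑ a ∈ F, (‖ι (x a) v‖ₑ * nw μ v) ^ p := by
    rw [Finset.sum_mul]
    exact ENNReal.rpow_sum_le_const_mul_sum_rpow _ _ hp
  refine ne_top_of_le_ne_top ?_ (ENNReal.tsum_le_tsum hle)
  rw [ENNReal.tsum_mul_left, Summable.tsum_finsetSum fun _ _ => ENNReal.summable]
  exact ENNReal.mul_ne_top
    (ENNReal.rpow_ne_top_of_nonneg (by linarith) (ENNReal.natCast_ne_top _))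
    (ENNReal.sum_ne_top.2 fun a _ => hX.energy_ne_top (x a))

lemma IsLpSpaceRep.enorm_apply_mul_le (hX : IsLpSpaceRep ι μ p) (hp : 0 < p) (x : X) (v : V) :
    ‖ι x v‖ₑ * nw μ v ≤ ‖x‖ₑ := by
  rw [← ENNReal.rpow_le_rpow_iff hp, hX.enorm_rpow hp]
  exact ENNReal.le_tsum v

lemma IsLpSpaceRep.continuous_apply (hX : IsLpSpaceRep ι μ p) (hp : 0 < p) {v : V}
    (hv : μ v ≠ 0) : Continuous fun x => ι x v := by
  let evalₗ : X →ₗ[𝕜] 𝕜 := LinearMap.proj v ∘ₗ ι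
  refine AddMonoidHomClass.continuous_of_bound evalₗ ‖μ v‖⁻¹ fun x => ?_
  rw [inv_mul_eq_div, le_div_iff₀ (norm_pos_iff.2 hv)]
  have h := ENNReal.toReal_mono enorm_ne_top (hX.enorm_apply_mul_le hp x v)
  simpa [nw, evalₗ] using h

lemma IsLpSpaceRep.exists_eq_toReal (hX : IsLpSpaceRep ι μ p) (hp : 0 < p) (hμ : ∀ v, μ v ≠ 0)
    {H : V → ℝ≥0∞} (hH : energy p (nw μ) H ≠ ⊤) :
    ∃ x, (ι x = fun v => ((H v).toReal : 𝕜)) ∧ ‖x‖ₑ ^ p = energy p (nw μ) H := by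
  have hnorm (v : V) : ‖((H v).toReal : 𝕜)‖ₑ = H v := by
    rw [← ofReal_norm, RCLike.norm_ofReal, abs_of_nonneg ENNReal.toReal_nonneg,
      ENNReal.ofReal_toReal (ne_top_of_energy_ne_top hp hH (by simpa [nw] using hμ v))]
  obtain ⟨x, hx⟩ : (fun v => ((H v).toReal : 𝕜)) ∈ Set.range ι :=
    hX.mem_range_iff.2 (by simpa only [hnorm] using hH)
  exact ⟨x, hx, by simp only [hX.enorm_rpow hp, hx, hnorm]⟩

lemma IsLpSpaceRep.exists_apply_ne_zero (hX : IsLpSpaceRep ι μ p) (hp : 0 < p)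
    (hμ : ∀ v, μ v ≠ 0) (v : V) : ∃ x, ι x v ≠ 0 := by
  have hE : energy p (nw μ) (({v} : Set V).indicator 1) ≠ ⊤ := by
    rw [energy_indicator hp, tsum_singleton v fun u => ((1 : V → ℝ≥0∞) u * nw μ u) ^ p]
    simp [nw, hp.le]
  obtain ⟨x, hx, -⟩ := hX.exists_eq_toReal hp hμ hE
  exact ⟨x, by simp [hx]⟩

/-- The vector of a space of functions on `V` that agrees with `x` on `A` and vanishes elsewhere.
It is meaningful in spaces closed under such truncations, such as `ℓ^p(V, μ)`. -/
noncomputable def restrict (ι : X →ₗ[𝕜] V → 𝕜) (A : Set V) (x : X) : X :=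
  Function.invFun ι (A.indicator (ι x))

lemma IsLpSpaceRep.apply_restrict (hX : IsLpSpaceRep ι μ p) (hp : 0 < p) (A : Set V) (x : X) :
    ι (restrict ι A x) = A.indicator (ι x) := by
  refine Function.invFun_eq (hX.mem_range_iff.2 (ne_top_of_le_ne_top (hX.energy_ne_top x)
    (ENNReal.tsum_le_tsum fun v => ?_)))
  gcongr
  exact enorm_indicator_le_enorm_self (ι x) v

lemma IsLpSpaceRep.enorm_restrict_rpow (hX : IsLpSpaceRep ι μ p) (hp : 0 < p) (A : Set V)
    (x : X) : ‖restrict ι A x‖ₑ ^ p = ∑' a : ↥A, (‖ι x a‖ₑ * nw μ a) ^ p := by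
  simp only [hX.enorm_rpow hp, hX.apply_restrict hp, enorm_indicator_eq_indicator_enorm]
  exact energy_indicator hp _ _ _

lemma IsLpSpaceRep.restrict_union (hX : IsLpSpaceRep ι μ p) (hp : 0 < p) (h : Disjoint A B)
    (x : X) : restrict ι (A ∪ B) x = restrict ι A x + restrict ι B x := by
  refine hX.1 ?_
  rw [map_add, hX.apply_restrict hp, hX.apply_restrict hp, hX.apply_restrict hp,
    Set.indicator_union_of_disjoint h]
  rfl

lemma IsLpSpaceRep.tendsto_restrict_zero (hX : IsLpSpaceRep ι μ p) (hp : 0 < p) {α : Type*}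
    {l : Filter α} {A : α → Set V} (hA : ∀ v, ∀ᶠ n in l, v ∉ A n) (x : X) :
    Tendsto (fun n => restrict ι (A n) x) l (𝓝 0) := by
  rw [tendsto_zero_iff_enorm_tendsto_zero, ENNReal.tendsto_nhds_zero]
  intro ε hε
  obtain ⟨F, hF⟩ := ((ENNReal.tendsto_nhds_zero.1 <| ENNReal.tendsto_tsum_compl_atTop_zero <|
    hX.energy_ne_top x) (ε ^ p) (ENNReal.rpow_pos_of_nonneg hε hp.le)).exists
  filter_upwards [F.eventually_all.2 fun v _ => hA v] with n hn
  rw [← ENNReal.rpow_le_rpow_iff hp, hX.enorm_restrict_rpow hp]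
  exact (ENNReal.tsum_mono_subtype (fun v => (‖ι x v‖ₑ * nw μ v) ^ p)
    (t := {v | v ∉ F}) fun v hv hvF => hn v hvF hv).trans hF

lemma IsLpSpaceRep.hasSum_restrict_singleton (hX : IsLpSpaceRep ι μ p) (hp : 0 < p) (x : X) :
    HasSum (fun v => restrict ι {v} x) x := by
  have hsum (F : Finset V) : ∑ v ∈ F, restrict ι {v} x = x - restrict ι (↑F)ᶜ x := by
    refine hX.1 (funext fun v => ?_)
    by_cases hv : v ∈ F <;> simp [hX.apply_restrict hp, hv]
  have hlim := hX.tendsto_restrict_zero hp (l := atTop) (A := fun F : Finset V => (↑F)ᶜ)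
    (fun v => (eventually_ge_atTop {v}).mono fun F hF => by simpa using hF) x
  simpa only [HasSum, SummationFilter.unconditional_filter, hsum, sub_zero] using
    tendsto_const_nhds.sub hlim

lemma IsLpSpaceRep.dense_span_range_restrict_singleton (hX : IsLpSpaceRep ι μ p) (hp : 0 < p)
    {x₀ : X} (hx₀ : ∀ v, ι x₀ v ≠ 0) :
    Dense (Submodule.span 𝕜 (Set.range fun v => restrict ι {v} x₀) : Set X) := by
  intro x
  have hsmul (v : V) : restrict ι {v} x = (ι x v / ι x₀ v) • restrict ι {v} x₀ := by
    refine hX.1 (funext fun u => ?_)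
    by_cases huv : u = v
    · subst huv
      simp [hX.apply_restrict hp, hx₀]
    · simp [hX.apply_restrict hp, huv]
  refine mem_closure_of_tendsto (hX.hasSum_restrict_singleton hp x) (.of_forall fun F => ?_)
  refine sum_mem fun v _ => hsmul v ▸ Submodule.smul_mem _ _ (Submodule.subset_span ⟨v, rfl⟩)

end LpSpace

section Shift

variable {𝕜 : Type*} [RCLike 𝕜] {X : Type*} [NormedAddCommGroup X] [NormedSpace 𝕜 X]
  {par : V → Option V} {lam : V → 𝕜} {ι : X →ₗ[𝕜] V → 𝕜} {μ : V → 𝕜} {p : ℝ} {T : X →L[𝕜] X}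
  {A B : Set V} {K : Set ℕ} {v : V} {x : X} {n : ℕ}

lemma IsShiftRep.map_restrict (hT : IsShiftRep par lam ι T) (hX : IsLpSpaceRep ι μ p)
    (hp : 0 < p) (hAB : ∀ u w, par u = some w → (u ∈ A ↔ w ∈ B)) (x : X) :
    T (restrict ι A x) = restrict ι B (T x) := by
  refine hX.1 (funext fun v => (hT (restrict ι A x) v).unique ?_)
  simp only [hX.apply_restrict hp, Set.indicator_apply, fun u : ↥(children par v) => hAB u v u.2]
  by_cases hv : v ∈ B
  · simpa only [hv, if_true] using hT x v
  · simpa only [hv, if_false, mul_zero] using hasSum_zero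

lemma IsShiftRep.pow_map_restrict_descendantsAt (hT : IsShiftRep par lam ι T)
    (hX : IsLpSpaceRep ι μ p) (hp : 0 < p) (hx : T x = x) (v : V) (K : Set ℕ) (n : ℕ) :
    (T ^ n) (restrict ι (descendantsAt par v ((· + n) '' K)) x) =
      restrict ι (descendantsAt par v K) x := by
  induction n with
  | zero => simp
  | succ n ih =>
    have himage : (· + (n + 1)) '' K = (· + 1) '' ((· + n) '' K) := by
      simp only [Set.image_image, add_assoc]
    rw [himage, pow_succ, mul_apply_eq_comp,
      hT.map_restrict hX hp fun u w => mem_descendantsAt_add_one_iff, hx, ih]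

lemma IsShiftRep.pow_apply_eq_zero (hT : IsShiftRep par lam ι T) (hι : Function.Injective ι)
    (hx : ∀ u, ι x u ≠ 0 → parIter par n u = none) : (T ^ n) x = 0 := by
  induction n generalizing x with
  | zero =>
    refine hι (funext fun u => ?_)
    by_contra hu
    exact Option.some_ne_none u (hx u (by simpa using hu))
  | succ n ih =>
    rw [pow_succ, mul_apply_eq_comp]
    refine ih fun w hw => ?_
    obtain ⟨u, hu⟩ : ∃ u : ↥(children par w), ι x u ≠ 0 := by
      by_contra! hzero
      exact hw ((hT x w).unique (by simpa only [hzero, mul_zero] using hasSum_zero))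
    exact parIter_succ_of_par_eq_some u.2 n ▸ hx u hu

lemma IsShiftRep.apply_map_eq_toReal (hT : IsShiftRep par (fun _ => 1) ι T) {H : V → ℝ≥0∞}
    (hx : ι x = fun v => ((H v).toReal : 𝕜)) (hsum : ∑' u : ↥(children par v), H u ≠ ⊤) :
    ι (T x) v = ((∑' u : ↥(children par v), H u).toReal : 𝕜) := by
  refine (hT x v).unique ?_
  simp only [hx, one_mul]
  rw [ENNReal.tsum_toReal_eq (ENNReal.ne_top_of_tsum_ne_top hsum)]
  exact RCLike.hasSum_ofReal 𝕜 |>.2 (ENNReal.summable_toReal hsum).hasSum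

lemma IsShiftRep.enorm_apply_map_le (hT : IsShiftRep par (fun _ => 1) ι T) (x : X) (v : V) :
    ‖ι (T x) v‖ₑ ≤ ∑' u : ↥(children par v), ‖ι x u‖ₑ := by
  rw [← (hT x v).tsum_eq]
  simpa only [one_mul] using enorm_tsum_le_tsum_enorm

lemma IsShiftRep.nw_le_mul_parallel (hT : IsShiftRep par (fun _ => 1) ι T)
    (hX : IsLpSpaceRep ι μ p) (hp : 1 < p) (hμ : ∀ v, μ v ≠ 0) (hA : A ⊆ children par v)
    (h0 : ∑' a : ↥A, nw μ a ^ (-conjExp p) ≠ 0)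
    (hfin : ∑' a : ↥A, nw μ a ^ (-conjExp p) ≠ ⊤) :
    nw μ v ≤ ‖T‖ₑ * parallel (conjExp p) fun a : ↥A => nw μ a := by
  have hpq := holderConjugate_conjExp hp
  -- Test `T` on the unit current through `A` of minimal energy.
  let r (a : ↥A) : ℝ≥0∞ := nw μ a
  let H := A.indicator fun u => nw μ u ^ (-conjExp p) / ∑' a : ↥A, nw μ a ^ (-conjExp p)
  have hE : energy p (nw μ) H = parallel (conjExp p) r ^ p := by
    rw [energy_indicator hpq.pos, ← tsum_share_mul_rpow hpq (fun a => by simp [nw, hμ]) h0 hfin]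
    rfl
  have hsum : ∑' u : ↥(children par v), H u = 1 := by
    rw [tsum_subtype (children par v) H, Set.indicator_indicator, Set.inter_eq_right.2 hA,
      ← tsum_subtype A, ← tsum_share h0 hfin]
    rfl
  have hpar : parallel (conjExp p) r ^ p ≠ ⊤ :=
    ENNReal.rpow_ne_top_of_nonneg hpq.nonneg (ENNReal.rpow_ne_top_of_ne_zero h0 hfin)
  obtain ⟨x, hx, hxnorm⟩ := hX.exists_eq_toReal hpq.pos hμ (hE ▸ hpar)
  rw [hE] at hxnorm
  calc nw μ v = ‖ι (T x) v‖ₑ * nw μ v := by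
        have hTx : ι (T x) v = 1 := by
          rw [hT.apply_map_eq_toReal hx (hsum ▸ ENNReal.one_ne_top), hsum, ENNReal.toReal_one,
            RCLike.ofReal_one]
        rw [hTx, enorm_one, one_mul]
    _ ≤ ‖T x‖ₑ := hX.enorm_apply_mul_le hpq.pos _ _
    _ ≤ ‖T‖ₑ * ‖x‖ₑ := T.le_opENorm x
    _ = ‖T‖ₑ * parallel (conjExp p) r := by
        rw [ENNReal.rpow_left_injective hpq.ne_zero hxnorm]

lemma IsShiftRep.sum_nw_rpow_le (hT : IsShiftRep par (fun _ => 1) ι T)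
    (hX : IsLpSpaceRep ι μ p) (hp : 1 < p) (hμ : ∀ v, μ v ≠ 0) {F : Finset V}
    (hF : ↑F ⊆ children par v) :
    ∑ a ∈ F, nw μ a ^ (-conjExp p) ≤ (‖T‖ₑ / nw μ v) ^ conjExp p := by
  have hpq := holderConjugate_conjExp hp
  have hS : ∑' a : ↥(F : Set V), nw μ a ^ (-conjExp p) = ∑ a ∈ F, nw μ a ^ (-conjExp p) :=
    F.tsum_subtype' fun a => nw μ a ^ (-conjExp p)
  have hle := hT.nw_le_mul_parallel hX hp hμ hF
  rw [parallel, hS] at hle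
  set S := ∑ a ∈ F, nw μ a ^ (-conjExp p)
  by_cases h0 : S = 0
  · exact h0 ▸ zero_le
  have hfin : S ≠ ⊤ := ENNReal.sum_ne_top.2 fun a _ => by simp [nw, hμ]
  have hroot0 : S ^ (1 / conjExp p) ≠ 0 := by simp [h0, hfin]
  have hroot : S ^ (1 / conjExp p) ≠ ⊤ := ENNReal.rpow_ne_top_of_ne_zero h0 hfin
  specialize hle h0 hfin
  rw [ENNReal.rpow_neg, ← div_eq_mul_inv,
    ENNReal.le_div_iff_mul_le (.inl hroot0) (.inl hroot), mul_comm,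
    ← ENNReal.le_div_iff_mul_le (.inl (by simp [nw, hμ])) (.inl (by simp [nw])), one_div,
    ENNReal.rpow_inv_le_iff hpq.symm.pos] at hle
  exact hle

lemma IsShiftRep.tsum_children_nw_rpow_ne_top (hT : IsShiftRep par (fun _ => 1) ι T)
    (hX : IsLpSpaceRep ι μ p) (hp : 1 < p) (hμ : ∀ v, μ v ≠ 0) (v : V) :
    ∑' u : ↥(children par v), nw μ u ^ (-conjExp p) ≠ ⊤ := by
  have hpq := holderConjugate_conjExp hp
  refine ne_top_of_le_ne_top (ENNReal.rpow_ne_top_of_nonneg hpq.symm.nonneg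
    (ENNReal.div_ne_top (enorm_ne_top (x := T)) (by simp [nw, hμ] : nw μ v ≠ 0))) ?_
  rw [ENNReal.tsum_eq_iSup_sum]
  refine iSup_le fun F => ?_
  have hF := hT.sum_nw_rpow_le hX hp hμ (F := F.map (.subtype _)) (v := v) (by simp)
  simpa only [Finset.sum_map, Function.Embedding.subtype_apply] using hF

end Shift

section Chaos

variable {𝕜 : Type*} [RCLike 𝕜] {X : Type*} [NormedAddCommGroup X] [NormedSpace 𝕜 X]
  {par : V → Option V} {root v : V} {ι : X →ₗ[𝕜] V → 𝕜} {μ : V → 𝕜} {p : ℝ} {T : X →L[𝕜] X} {x : X}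

lemma IsShiftRep.isSubflow_sum_orbit (hT : IsShiftRep par (fun _ => 1) ι T) {N : ℕ}
    (hx : (T ^ N) x = x) : IsSubflow par fun v => ∑ n ∈ Finset.range N, ‖ι ((T ^ n) x) v‖ₑ := by
  intro v
  calc ∑ n ∈ Finset.range N, ‖ι ((T ^ n) x) v‖ₑ
      = ∑ n ∈ Finset.range N, ‖ι (T ((T ^ n) x)) v‖ₑ := by
        refine (ENNReal.add_left_inj (enorm_ne_top (x := ι x v))).1 ?_
        have hshift := (Finset.sum_range_succ (fun n => ‖ι ((T ^ n) x) v‖ₑ) N).symm.trans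
          (Finset.sum_range_succ' (fun n => ‖ι ((T ^ n) x) v‖ₑ) N)
        simpa only [hx, pow_succ', mul_apply_eq_comp, pow_zero, one_apply_eq_self] using hshift
    _ ≤ ∑ n ∈ Finset.range N, ∑' u : ↥(children par v), ‖ι ((T ^ n) x) u‖ₑ :=
        Finset.sum_le_sum fun n _ => hT.enorm_apply_map_le _ v
    _ = ∑' u : ↥(children par v), ∑ n ∈ Finset.range N, ‖ι ((T ^ n) x) u‖ₑ :=
        (Summable.tsum_finsetSum fun _ _ => ENNReal.summable).symm

lemma IsShiftRep.cpC_lt_top_of_isPeriodicPoint (hT : IsShiftRep par (fun _ => 1) ι T)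
    (hX : IsLpSpaceRep ι μ p) (hTree : IsDirectedTree par) (hLeafless : Leafless par)
    (hp : 1 < p) (hμ : ∀ v, μ v ≠ 0) (hx : IsPeriodicPoint T x) (hv : ι x v ≠ 0) :
    cpC (children par) (nw μ) p v < ⊤ := by
  obtain ⟨N, hN, hTx⟩ := hx
  refine (hT.isSubflow_sum_orbit hTx).cpC_lt_top hTree hLeafless hp (by simpa [nw] using hμ)
    (hX.energy_sum_ne_top hp.le _ _) fun h => hv ?_
  simpa using Finset.sum_eq_zero_iff.1 h 0 (Finset.mem_range.2 hN)

lemma IsShiftRep.cpC_lt_top_of_dense_isPeriodicPoint (hT : IsShiftRep par (fun _ => 1) ι T)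
    (hX : IsLpSpaceRep ι μ p) (hTree : IsDirectedTree par) (hLeafless : Leafless par)
    (hp : 1 < p) (hμ : ∀ v, μ v ≠ 0) (hdense : Dense {x | IsPeriodicPoint T x}) (v : V) :
    cpC (children par) (nw μ) p v < ⊤ := by
  have hp0 : 0 < p := zero_lt_one.trans hp
  obtain ⟨x, hxv, hx⟩ := hdense.inter_open_nonempty {x | ι x v ≠ 0}
    (isOpen_ne.preimage (hX.continuous_apply hp0 (hμ v))) (hX.exists_apply_ne_zero hp0 hμ v)
  exact hT.cpC_lt_top_of_isPeriodicPoint hX hTree hLeafless hp hμ hx hxv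

variable {lam : V → 𝕜}

lemma IsShiftRep.pow_map_restrict_singleton_eq_zero (hT : IsShiftRep par lam ι T)
    (hX : IsLpSpaceRep ι μ p) (hp : 0 < p) (hTree : IsDirectedTree par) (hroot : IsRoot par root)
    {n : ℕ} (hn : depth par root v < n) (x : X) : (T ^ n) (restrict ι {v} x) = 0 := by
  refine hT.pow_apply_eq_zero hX.1 fun u hu => ?_
  obtain rfl : u = v := by
    by_contra huv
    simp [hX.apply_restrict hp, huv] at hu
  exact hTree.parIter_eq_none_of_depth_lt hroot hn

lemma IsLpSpaceRep.restrict_descendantsAt_dvd (hX : IsLpSpaceRep ι μ p) (hp : 0 < p)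
    (hTree : IsDirectedTree par) {n : ℕ} (hn : 0 < n) (v : V) (x : X) :
    restrict ι (descendantsAt par v {k | n ∣ k}) x =
      restrict ι {v} x + restrict ι (descendantsAt par v ((· + n) '' {k | n ∣ k})) x := by
  have hunion : {k | n ∣ k} = {0} ∪ (· + n) '' {k | n ∣ k} := by
    ext k
    simp only [Set.mem_ofPred_eq, Set.singleton_union, Set.mem_insert_iff, Set.mem_image]
    constructor
    · rintro ⟨_ | m, rfl⟩
      · exact .inl rfl
      · exact .inr ⟨n * m, dvd_mul_right n m, rfl⟩
    · rintro (rfl | ⟨j, hj, rfl⟩)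
      · exact dvd_zero n
      · exact hj.add (dvd_refl n)
  have hdisj : Disjoint {0} ((· + n) '' {k | n ∣ k}) := by
    simp [hn.ne']
  conv_lhs => rw [hunion, descendantsAt_union, hX.restrict_union hp
    (hTree.disjoint_descendantsAt hdisj), descendantsAt_zero]

lemma IsShiftRep.isChaosVector_restrict_singleton (hT : IsShiftRep par lam ι T)
    (hX : IsLpSpaceRep ι μ p) (hp : 0 < p) (hTree : IsDirectedTree par) (hroot : IsRoot par root)
    (hx : T x = x) (v : V) : IsChaosVector T (restrict ι {v} x) where
  eventually_pow_apply_eq_zero := (eventually_gt_atTop (depth par root v)).mono fun _ hn =>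
    hT.pow_map_restrict_singleton_eq_zero hX hp hTree hroot hn x
  exists_preimages := by
    refine ⟨fun n => restrict ι (descendantsAt par v ((· + n) '' {0})) x,
      hX.tendsto_restrict_zero hp (hTree.eventually_notMem_descendantsAt (by simp) v) x,
      .of_forall fun n => ?_⟩
    rw [hT.pow_map_restrict_descendantsAt hX hp hx, descendantsAt_zero]
  exists_periodic := by
    refine ⟨fun n => restrict ι (descendantsAt par v {k | n ∣ k}) x, ?_, ?_⟩
    · have hlim := (hX.tendsto_restrict_zero hp
        (A := fun n => descendantsAt par v ((· + n) '' {k | n ∣ k}))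
        (hTree.eventually_notMem_descendantsAt (by simp) v) x).const_add (restrict ι {v} x)
      rw [add_zero] at hlim
      refine hlim.congr' ?_
      filter_upwards [eventually_gt_atTop 0] with n hn
      exact (hX.restrict_descendantsAt_dvd hp hTree hn v x).symm
    · filter_upwards [eventually_gt_atTop (depth par root v)] with n hn
      conv_lhs => rw [hX.restrict_descendantsAt_dvd hp hTree (Nat.zero_lt_of_lt hn) v x]
      rw [map_add, hT.pow_map_restrict_singleton_eq_zero hX hp hTree hroot hn,
        hT.pow_map_restrict_descendantsAt hX hp hx, zero_add]

lemma IsShiftRep.chaoticOp_of_map_eq_self [CompleteSpace X] (hT : IsShiftRep par lam ι T)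
    (hX : IsLpSpaceRep ι μ p) (hp : 0 < p) (hTree : IsDirectedTree par) (hroot : IsRoot par root)
    (hx : T x = x) (hx0 : ∀ v, ι x v ≠ 0) : ChaoticOp T := by
  have := hTree.countable
  have hdense := hX.dense_span_range_restrict_singleton hp hx0
  have := secondCountableTopology_of_dense_span (Set.countable_range _) hdense
  exact chaoticOp_of_forall_mem_isChaosVector
    (Set.forall_mem_range.2 (hT.isChaosVector_restrict_singleton hX hp hTree hroot hx)) hdense

lemma IsShiftRep.exists_fixed_vector (hT : IsShiftRep par (fun _ => 1) ι T)
    (hX : IsLpSpaceRep ι μ p) (hTree : IsDirectedTree par) (hroot : IsRoot par root)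
    (hLeafless : Leafless par) (hp : 1 < p) (hμ : ∀ v, μ v ≠ 0)
    (hc : ∀ v, cpC (children par) (nw μ) p v < ⊤) : ∃ x, T x = x ∧ ∀ v, ι x v ≠ 0 := by
  have hp0 : 0 < p := zero_lt_one.trans hp
  have hw0 (v : V) : nw μ v ≠ 0 := by simpa [nw] using hμ v
  obtain ⟨P, hP, hP0, hE⟩ := hTree.exists_flow_of_cpC_lt_top hroot hLeafless hp hw0
    (fun v => ENNReal.coe_ne_top) (hT.tsum_children_nw_rpow_ne_top hX hp hμ) hc
  have hPtop (v : V) : P v ≠ ⊤ := ne_top_of_energy_ne_top hp0 hE (hw0 v)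
  obtain ⟨x, hx, -⟩ := hX.exists_eq_toReal hp0 hμ hE
  refine ⟨x, hX.1 (funext fun v => ?_), fun v => ?_⟩
  · rw [hT.apply_map_eq_toReal hx (hP v ▸ hPtop v), ← hP v, hx]
  · simp [hx, ENNReal.toReal_eq_zero_iff, hP0 v, hPtop v]

end Chaos

/-- Theorem 7.1 / `t-charpmu`: on a leafless rooted tree, the unweighted
backward shift, as an operator on `ℓ^p(V,μ)` (`1 < p < ∞`), is chaotic if and only if
`c_p(V(v), μ) < ∞` for every vertex `v`. -/
theorem statement10
    {𝕜 : Type*} [RCLike 𝕜] {V : Type*} (par : V → Option V) (hTree : IsDirectedTree par)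
    (hLeafless : Leafless par) (root : V) (hroot : IsRoot par root)
    (μ : V → 𝕜) (hμ : ∀ v : V, μ v ≠ 0) (p : ℝ) (hp : 1 < p)
    {X : Type*} [NormedAddCommGroup X] [NormedSpace 𝕜 X] [CompleteSpace X]
    (ι : X →ₗ[𝕜] V → 𝕜) (hX : IsLpSpaceRep ι μ p)
    (T : X →L[𝕜] X) (hT : IsShiftRep par (fun _ : V => (1 : 𝕜)) ι T) :
    ChaoticOp T ↔ ∀ v : V, cpC (children par) (nw μ) p v < ⊤ := by
  refine ⟨fun ⟨_, hperiodic⟩ => hT.cpC_lt_top_of_dense_isPeriodicPoint hX hTree hLeafless hp hμ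
    hperiodic, fun hc => ?_⟩
  obtain ⟨x, hx, hx0⟩ := hT.exists_fixed_vector hX hTree hroot hLeafless hp hμ hc
  exact hT.chaoticOp_of_map_eq_self hX (zero_lt_one.trans hp) hTree hroot hx hx0

end PaperTree
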